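/- Let $R$ be a commutative Noetherian ring, $I$ an ideal such that the category of $I$-cofinite modules is closed under kernels and cokernels, $M$ an $I$-cofinite $R$-module, and $N$ a finitely generated $R$-module. Then $\mathrm{Tor}_i^R(N, M)$ and $\mathrm{Ext}^i_R(N, M)$ are $I$-cofinite for all $i \ge 0$. -/

import Mathlib

open CategoryTheory

/-- An `R`-module `X` is `I`-cofinite if its support is contained in `V(I)` and
`Ext^i_R(R/I, X)` is a finitely generated `R`-module for every `i ≥ 0`. -/
def IsCofinite (R : Type) [CommRing R] (I : Ideal R)
    (X : Type) [AddCommGroup X] [Module R X] : Prop :=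
  Module.support R X ⊆ PrimeSpectrum.zeroLocus (I : Set R) ∧
  ∀ i : ℕ, Module.Finite R
    (((Ext R (ModuleCat R) i).obj (Opposite.op (ModuleCat.of R (R ⧸ I)))).obj
      (ModuleCat.of R X))

open Limits MonoidalCategory

namespace Cof

instance extAdditive (R : Type) [CommRing R] (X : (ModuleCat.{0} R)ᵒᵖ) (i : ℕ) :
    ((Ext R (ModuleCat R) i).obj X).Additive where
  map_add {Y Z f g} := by
    have P := projectiveResolution X.unop
    have key : (NatTrans.leftDerived (NatTrans.rightOp
          ((linearYoneda R (ModuleCat R)).map (f + g))) i).app X.unop =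
        (NatTrans.leftDerived (NatTrans.rightOp ((linearYoneda R (ModuleCat R)).map f)) i).app
          X.unop +
        (NatTrans.leftDerived (NatTrans.rightOp ((linearYoneda R (ModuleCat R)).map g)) i).app
          X.unop := by
      rw [P.leftDerived_app_eq, P.leftDerived_app_eq, P.leftDerived_app_eq,
        ← Preadditive.comp_add, ← Preadditive.add_comp, ← Functor.map_add]
      congr 3
    exact congrArg Quiver.Hom.unop key

variable {R : Type} [CommRing R] {I : Ideal R}

theorem of_equiv {X Y : Type} [AddCommGroup X] [Module R X] [AddCommGroup Y] [Module R Y]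
    (e : X ≃ₗ[R] Y) (h : IsCofinite R I X) : IsCofinite R I Y := by
  refine ⟨e.support_eq ▸ h.1, fun i => ?_⟩
  have := h.2 i
  exact Module.Finite.equiv
    (((Ext R (ModuleCat R) i).obj (Opposite.op (ModuleCat.of R (R ⧸ I)))).mapIso
      e.toModuleIso).toLinearEquiv

theorem pi {X : Type} [AddCommGroup X] [Module R X] (h : IsCofinite R I X) (n : ℕ) :
    IsCofinite R I (Fin n → X) := by
  constructor
  · refine subset_trans ?_ h.1
    intro p hp
    rw [Module.mem_support_iff_exists_annihilator] at hp ⊢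
    obtain ⟨m, hm⟩ := hp
    by_contra! hc
    simp only [SetLike.not_le_iff_exists] at hc
    choose r hr hr' using fun j => hc (m j)
    have : ∏ j, r j ∈ p.asIdeal := hm (by
      rw [Submodule.mem_annihilator_span_singleton]
      ext j
      obtain ⟨c, hc⟩ := Finset.dvd_prod_of_mem r (Finset.mem_univ j)
      have := hr j
      rw [Submodule.mem_annihilator_span_singleton] at this
      rw [Pi.smul_apply, hc, mul_comm, mul_smul, this, smul_zero, Pi.zero_apply])
    rw [Ideal.IsPrime.prod_mem_iff] at this
    obtain ⟨j, -, hj⟩ := this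
    exact hr' j hj
  · intro i
    have hf := h.2 i
    set G := (Ext R (ModuleCat R) i).obj (Opposite.op (ModuleCat.of R (R ⧸ I)))
    let φ : (Fin n → G.obj (ModuleCat.of R X)) →ₗ[R] G.obj (ModuleCat.of R (Fin n → X)) :=
      ∑ j, (G.map (ModuleCat.ofHom (LinearMap.single R (fun _ : Fin n => X) j))).hom ∘ₗ
        LinearMap.proj j
    refine Module.Finite.of_surjective φ fun y => ?_
    refine ⟨fun j => (G.map (ModuleCat.ofHom (LinearMap.proj j))).hom y, ?_⟩
    have h1 : ∑ j, ModuleCat.ofHom (LinearMap.proj (R := R) (φ := fun _ : Fin n => X) j) ≫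
        ModuleCat.ofHom (LinearMap.single R (fun _ : Fin n => X) j) = 𝟙 _ := by
      ext x k
      simp [ModuleCat.hom_sum, Finset.sum_apply, Pi.single_apply]
    have h2 := congrArg G.map h1
    rw [Functor.map_sum, G.map_id] at h2
    have h3 := congrArg (fun t => t.hom y) h2
    simp only [G.map_comp, ModuleCat.hom_sum, LinearMap.sum_apply, ModuleCat.hom_comp,
      LinearMap.comp_apply, ModuleCat.hom_id, LinearMap.id_apply] at h3
    simpa [φ, LinearMap.sum_apply] using h3

theorem presentation [IsNoetherianRing R] (N : Type) [AddCommGroup N] [Module R N]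
    [Module.Finite R N] : ∃ (m n : ℕ) (f : (Fin m → R) →ₗ[R] (Fin n → R))
      (g : (Fin n → R) →ₗ[R] N), Function.Exact f g ∧ Function.Surjective g := by
  obtain ⟨n, g, hg⟩ := Module.Finite.exists_fin' R N
  obtain ⟨m, f, hf⟩ := Module.Finite.exists_fin' R (LinearMap.ker g)
  refine ⟨m, n, (LinearMap.ker g).subtype ∘ₗ f, g, ?_, hg⟩
  rw [LinearMap.exact_iff, LinearMap.range_comp, LinearMap.range_eq_top.2 hf]
  simp

/-- the closure hypothesis -/
def Closed (R : Type) [CommRing R] (I : Ideal R) : Prop :=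
  ∀ (M N : Type) [AddCommGroup M] [Module R M] [AddCommGroup N]
      [Module R N] (f : M →ₗ[R] N), IsCofinite R I M → IsCofinite R I N →
      IsCofinite R I (LinearMap.ker f) ∧ IsCofinite R I (N ⧸ LinearMap.range f)

theorem hom [IsNoetherianRing R] (H : Closed R I)
    {M : Type} [AddCommGroup M] [Module R M] (hM : IsCofinite R I M)
    (N : Type) [AddCommGroup N] [Module R N] [Module.Finite R N] :
    IsCofinite R I (N →ₗ[R] M) := by
  obtain ⟨m, n, f, g, hfg, hg⟩ := presentation (R := R) N
  have hF : ∀ k, IsCofinite R I ((Fin k → R) →ₗ[R] M) := fun k =>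
    of_equiv ((Pi.basisFun R (Fin k)).constr R) (pi hM k)
  have h1 := (H _ _ (LinearMap.lcomp R M f) (hF n) (hF m)).1
  have h2 : Function.Exact (LinearMap.lcomp R M g) (LinearMap.lcomp R M f) :=
    LinearMap.exact_lcomp_of_exact_of_surjective _ hfg hg
  rw [LinearMap.exact_iff] at h2
  rw [h2] at h1
  refine of_equiv (LinearEquiv.ofInjective (LinearMap.lcomp R M g) ?_).symm h1
  exact LinearMap.lcomp_injective_of_surjective g hg

open scoped TensorProduct in
theorem tensor [IsNoetherianRing R] (H : Closed R I)
    {M : Type} [AddCommGroup M] [Module R M] (hM : IsCofinite R I M)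
    (N : Type) [AddCommGroup N] [Module R N] [Module.Finite R N] :
    IsCofinite R I (N ⊗[R] M) := by
  obtain ⟨m, n, f, g, hfg, hg⟩ := presentation (R := R) N
  have hF : ∀ k, IsCofinite R I ((Fin k → R) ⊗[R] M) := fun k =>
    of_equiv ((TensorProduct.comm R _ _ ≪≫ₗ TensorProduct.piScalarRight R R M (Fin k)).symm)
      (pi hM k)
  have h1 := (H _ _ (f.rTensor M) (hF m) (hF n)).2
  have h2 := rTensor_exact M hfg hg
  rw [LinearMap.exact_iff] at h2
  rw [← h2] at h1
  exact of_equiv ((g.rTensor M).quotKerEquivOfSurjective (LinearMap.rTensor_surjective M hg)) h1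

theorem homology (H : Closed R I) (S : ShortComplex (ModuleCat.{0} R)) (h1 : IsCofinite R I S.X₁)
    (h2 : IsCofinite R I S.X₂) (h3 : IsCofinite R I S.X₃) : IsCofinite R I S.homology := by
  refine of_equiv S.moduleCatHomologyIso.symm.toLinearEquiv ?_
  exact (H _ _ S.moduleCatToCycles h1 (H _ _ S.g.hom h2 h3).1).2

theorem shift (H : Closed R I)
    (S : ShortComplex (HomologicalComplex (ModuleCat.{0} R) (ComplexShape.down ℕ)))
    (hS : S.ShortExact) (i : ℕ) (hz : IsZero (S.X₂.homology (i + 1)))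
    (h1 : IsCofinite R I (S.X₁.homology i)) (h2 : IsCofinite R I (S.X₂.homology i)) :
    IsCofinite R I (S.X₃.homology (i + 1)) := by
  have h3 := (H _ _ (HomologicalComplex.homologyMap S.f i).hom h1 h2).1
  have hex := hS.homology_exact₁ (i + 1) i (by simp)
  have hmono := hS.mono_δ (i + 1) i (by simp) hz
  rw [ModuleCat.mono_iff_injective] at hmono
  rw [ShortComplex.ShortExact.moduleCat_exact_iff_function_exact, LinearMap.exact_iff] at hex
  have hex' : LinearMap.ker (HomologicalComplex.homologyMap S.f i).hom =
    LinearMap.range (hS.δ (i + 1) i (by simp)).hom := hex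
  rw [hex'] at h3
  exact of_equiv (LinearEquiv.ofInjective _ hmono).symm h3

noncomputable abbrev TorCx (X M : ModuleCat.{0} R) : HomologicalComplex (ModuleCat.{0} R) (ComplexShape.down ℕ) :=
  (((tensoringLeft (ModuleCat R)).obj X).mapHomologicalComplex _).obj
    (projectiveResolution M).complex

noncomputable def torIso (X M : ModuleCat.{0} R) (j : ℕ) :
    ((Tor (ModuleCat R) j).obj X).obj M ≅ (TorCx X M).homology j :=
  (projectiveResolution M).isoLeftDerivedObj _ j

noncomputable def torSC (T : ShortComplex (ModuleCat.{0} R)) (M : ModuleCat.{0} R) :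
    ShortComplex (HomologicalComplex (ModuleCat.{0} R) (ComplexShape.down ℕ)) where
  X₁ := TorCx T.X₁ M
  X₂ := TorCx T.X₂ M
  X₃ := TorCx T.X₃ M
  f := (NatTrans.mapHomologicalComplex ((tensoringLeft (ModuleCat R)).map T.f)
        (ComplexShape.down ℕ)).app _
  g := (NatTrans.mapHomologicalComplex ((tensoringLeft (ModuleCat R)).map T.g)
        (ComplexShape.down ℕ)).app _
  zero := by
    ext j : 1
    change (T.f ▷ _) ≫ (T.g ▷ _) = 0
    rw [← comp_whiskerRight, T.zero, MonoidalPreadditive.zero_whiskerRight]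

theorem torSC_shortExact {T : ShortComplex (ModuleCat.{0} R)} (hT : T.ShortExact)
    (M : ModuleCat.{0} R) : (torSC T M).ShortExact := by
  apply HomologicalComplex.shortExact_of_degreewise_shortExact
  intro j
  have : Projective ((projectiveResolution M).complex.X j) := (projectiveResolution M).projective j
  have : Module.Projective R ((projectiveResolution M).complex.X j) :=
    (IsProjective.iff_projective _).2 this
  exact hT.map_of_exact (tensorRight ((projectiveResolution M).complex.X j))

theorem flat_exactAt (F : ModuleCat.{0} R) [Module.Flat R F]
    (K : HomologicalComplex (ModuleCat.{0} R) (ComplexShape.down ℕ)) (i : ℕ) (h : K.ExactAt i) :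
    ((((tensoringLeft (ModuleCat R)).obj F).mapHomologicalComplex _).obj K).ExactAt i := by
  have h' : ((K.sc i).map (tensorLeft F)).Exact :=
    Module.Flat.lTensor_shortComplex_exact F (K.sc i) h
  exact h'

theorem torCx_isZero (F M : ModuleCat.{0} R) [Module.Flat R F] (i : ℕ) :
    IsZero ((TorCx F M).homology (i + 1)) :=
  (flat_exactAt F _ _ ((projectiveResolution M).complex_exactAt_succ i)).isZero_homology

variable [IsNoetherianRing R]

instance fgProj (P : Type) [AddCommGroup P] [Module R P] [Module.Finite R P]
    [Module.Projective R P] : Projective (FGModuleCat.of R P) where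
  factors {E X} f e he := by
    have hs : Epi ((forget₂ (FGModuleCat R) (ModuleCat.{0} R)).map e) := inferInstance
    rw [ModuleCat.epi_iff_surjective] at hs
    obtain ⟨h, hh⟩ := Module.projective_lifting_property e.hom.hom f.hom.hom hs
    refine ⟨FGModuleCat.ofHom h, ?_⟩
    ext x
    exact LinearMap.congr_fun hh x

instance : EnoughProjectives (FGModuleCat.{0} R) where
  presentation X := by
    obtain ⟨n, g, hg⟩ := Module.Finite.exists_fin' R X
    refine ⟨{ p := FGModuleCat.of R (Fin n → R), f := FGModuleCat.ofHom g, epi := ?_ }⟩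
    apply (forget₂ (FGModuleCat R) (ModuleCat.{0} R)).epi_of_epi_map
    rw [ModuleCat.epi_iff_surjective]
    exact hg

instance : (forget₂ (FGModuleCat.{0} R) (ModuleCat.{0} R)).PreservesProjectiveObjects where
  projective_obj {P} hP := by
    obtain ⟨n, g, hg⟩ := Module.Finite.exists_fin' R P
    have : Epi (FGModuleCat.ofHom g : FGModuleCat.of R (Fin n → R) ⟶ P) := by
      apply (forget₂ (FGModuleCat R) (ModuleCat.{0} R)).epi_of_epi_map
      rw [ModuleCat.epi_iff_surjective]
      exact hg
    let s := Projective.factorThru (𝟙 P) (FGModuleCat.ofHom g : FGModuleCat.of R (Fin n → R) ⟶ P)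
    have hs : s ≫ FGModuleCat.ofHom g = 𝟙 P := Projective.factorThru_comp _ _
    have : Module.Projective R P := Module.Projective.of_split s.hom.hom g (by
      exact congrArg (fun t => t.hom.hom) hs)
    exact (IsProjective.iff_projective (R := R) P).1 this

theorem ext_cofinite (H : Closed R I)
    {M : Type} [AddCommGroup M] [Module R M] (hM : IsCofinite R I M)
    (N : Type) [AddCommGroup N] [Module R N] [Module.Finite R N] (i : ℕ) :
    IsCofinite R I (((Ext R (ModuleCat R) i).obj
        (Opposite.op (ModuleCat.of R N))).obj (ModuleCat.of R M)) := by
  let P := projectiveResolution (FGModuleCat.of R N)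
  let Q : ProjectiveResolution (ModuleCat.of R N) :=
    (forget₂ (FGModuleCat.{0} R) (ModuleCat.{0} R)).mapProjectiveResolution P
  refine of_equiv (Q.isoExt (R := R) i (ModuleCat.of R M)).symm.toLinearEquiv ?_
  have key : ∀ j, IsCofinite R I ((Q.complex.linearYonedaObj R (ModuleCat.of R M)).X j) := by
    intro j
    exact of_equiv (ModuleCat.homLinearEquiv (S := R) (M := Q.complex.X j)
      (N := ModuleCat.of R M)).symm (hom H hM (P.complex.X j))
  exact homology H _ (key _) (key _) (key _)

theorem tor_cofinite (H : Closed R I)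
    {M : Type} [AddCommGroup M] [Module R M] (hM : IsCofinite R I M)
    (N : Type) [AddCommGroup N] [Module R N] [Module.Finite R N] (i : ℕ) :
    IsCofinite R I (((Tor (ModuleCat R) i).obj (ModuleCat.of R N)).obj
        (ModuleCat.of R M)) := by
  induction i generalizing N with
  | zero =>
    refine of_equiv (((tensorLeft (ModuleCat.of R N)).leftDerivedZeroIsoSelf.app
      (ModuleCat.of R M)).symm.toLinearEquiv) ?_
    exact tensor H hM N
  | succ i ih =>
    obtain ⟨n, g, hg⟩ := Module.Finite.exists_fin' R N
    have hT : g.shortComplexKer.ShortExact := LinearMap.shortExact_shortComplexKer hg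
    have h1 : IsCofinite R I ((TorCx (ModuleCat.of R (LinearMap.ker g))
        (ModuleCat.of R M)).homology i) :=
      of_equiv (torIso _ _ _).toLinearEquiv (ih (LinearMap.ker g))
    have h2 : IsCofinite R I ((TorCx (ModuleCat.of R (Fin n → R))
        (ModuleCat.of R M)).homology i) :=
      of_equiv (torIso _ _ _).toLinearEquiv (ih (Fin n → R))
    have hz := torCx_isZero (ModuleCat.of R (Fin n → R)) (ModuleCat.of R M) i
    refine of_equiv (torIso _ _ _).symm.toLinearEquiv ?_
    exact shift H (torSC g.shortComplexKer (ModuleCat.of R M)) (torSC_shortExact hT _) i hz h1 h2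

end Cof

theorem stmt_18 (R : Type) [CommRing R] [IsNoetherianRing R] (I : Ideal R)
    (habelian : ∀ (M N : Type) [AddCommGroup M] [Module R M] [AddCommGroup N]
      [Module R N] (f : M →ₗ[R] N), IsCofinite R I M → IsCofinite R I N →
      IsCofinite R I (LinearMap.ker f) ∧ IsCofinite R I (N ⧸ LinearMap.range f))
    (M N : Type) [AddCommGroup M] [Module R M] [AddCommGroup N] [Module R N]
    (hM : IsCofinite R I M) (hN : Module.Finite R N) :
    ∀ i : ℕ,
      IsCofinite R I (((Tor (ModuleCat R) i).obj (ModuleCat.of R N)).obj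
        (ModuleCat.of R M)) ∧
      IsCofinite R I (((Ext R (ModuleCat R) i).obj
        (Opposite.op (ModuleCat.of R N))).obj (ModuleCat.of R M)) :=
  fun i => ⟨Cof.tor_cofinite habelian hM N i, Cof.ext_cofinite habelian hM N i⟩
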